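/- Let V be a nonempty finite type, π : ℝ^d → V → ℝ a parameterized policy (π θ j > 0, ∑_j π θ j = 1, each θ ↦ π θ j differentiable at θ₀), q : V → ℝ with q j > 0 and ∑_j q j = 1, and f : ℝ → ℝ differentiable on (0, ∞). Write t_j(θ) := π θ j / q j. Then the Fréchet derivative at θ₀ of the f-divergence θ ↦ ∑_{j∈V} q j · f(t_j(θ)) equals ∑_{j∈V} π θ₀ j · f′(t_j(θ₀)) · D_θ(log(π θ j))|_{θ₀}. -/

import Mathlib

open Finset

/-!
Scaling the argument of `f` by `1 / q j` cancels the weight `q j` under differentiation, so the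
chain rule gives `∑ j, f' (t_j) • D π_j`. The log-derivative trick `D π_j = π_j • D (log π_j)` then
puts the gradient in score-function form.
-/

/-- The `f`-divergence `D_f(p‖q)` of two families of weights on a finite type. The weights are not
required to be normalized; terms with `q j = 0` contribute `0`. -/
noncomputable def fDivergence {V : Type*} [Fintype V] (f : ℝ → ℝ) (p q : V → ℝ) : ℝ :=
  ∑ j, q j * f (p j / q j)

theorem hasDerivAt_smul_comp_div {𝕜 F : Type*} [NontriviallyNormedField 𝕜]
    [NormedAddCommGroup F] [NormedSpace 𝕜 F] {f : 𝕜 → F} {f' : F} {c x : 𝕜} (hc : c ≠ 0)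
    (hf : HasDerivAt f f' (x / c)) : HasDerivAt (fun y => c • f (y / c)) f' x := by
  have hdiv : HasDerivAt (fun y => y / c) (1 / c) x := (hasDerivAt_id x).div_const c
  have hscaled : HasDerivAt (fun y => c • f (y / c)) (c • (1 / c) • f') x :=
    (hf.scomp x hdiv).const_smul c
  rwa [smul_smul, mul_one_div_cancel hc, one_smul] at hscaled

section Gradient

variable {E : Type*} [NormedAddCommGroup E] [NormedSpace ℝ E]

theorem smul_fderiv_log {g : E → ℝ} {x : E} (hg : DifferentiableAt ℝ g x) (hx : g x ≠ 0) :
    g x • fderiv ℝ (fun y => Real.log (g y)) x = fderiv ℝ g x := by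
  rw [fderiv.log hg hx, smul_inv_smul₀ hx]

variable {V : Type*} [Fintype V] {π : E → V → ℝ} {θ₀ : E} {q : V → ℝ} {f f' : ℝ → ℝ}

theorem hasFDerivAt_fDivergence {π' : V → E →L[ℝ] ℝ}
    (hπ : ∀ j, HasFDerivAt (fun θ => π θ j) (π' j) θ₀) (hq : ∀ j, q j ≠ 0)
    (hf : ∀ j, HasDerivAt f (f' (π θ₀ j / q j)) (π θ₀ j / q j)) :
    HasFDerivAt (fun θ => fDivergence f (π θ) q) (∑ j, f' (π θ₀ j / q j) • π' j) θ₀ := by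
  refine HasFDerivAt.fun_sum fun j _ => ?_
  have hterm : HasFDerivAt ((fun p => q j • f (p / q j)) ∘ fun θ => π θ j)
      (f' (π θ₀ j / q j) • π' j) θ₀ :=
    (hasDerivAt_smul_comp_div (hq j) (hf j)).comp_hasFDerivAt θ₀ (hπ j)
  exact hterm

theorem f_divergence_gradient_general (hπpos : ∀ j, 0 < π θ₀ j)
    (hπdiff : ∀ j, DifferentiableAt ℝ (fun θ => π θ j) θ₀) (hq : ∀ j, q j ≠ 0)
    (hf : ∀ j, HasDerivAt f (f' (π θ₀ j / q j)) (π θ₀ j / q j)) :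
    HasFDerivAt (fun θ => fDivergence f (π θ) q)
      (∑ j, (π θ₀ j * f' (π θ₀ j / q j)) • fderiv ℝ (fun θ => Real.log (π θ j)) θ₀) θ₀ := by
  have hscore (j : V) :
      (π θ₀ j * f' (π θ₀ j / q j)) • fderiv ℝ (fun θ => Real.log (π θ j)) θ₀ =
        f' (π θ₀ j / q j) • fderiv ℝ (fun θ => π θ j) θ₀ := by
    rw [mul_comm, mul_smul, smul_fderiv_log (hπdiff j) (hπpos j).ne']
  simpa only [hscore] using hasFDerivAt_fDivergence (fun j => (hπdiff j).hasFDerivAt) hq hf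

end Gradient

/-- For a parameterized policy `π` (positive, summing to one,
differentiable at `θ₀`), a strictly positive reference pmf `q`, and `f : ℝ → ℝ`
differentiable on `(0, ∞)` with derivative `f'`, writing `t_j(θ) = π θ j / q j`, the
Fréchet derivative at `θ₀` of the `f`-divergence `θ ↦ ∑_j q j · f(t_j(θ))` equals
`∑_j π θ₀ j · f'(t_j(θ₀)) · D_θ(log π θ j)|_{θ₀}`. -/
theorem f_divergence_gradient
    {V : Type*} [Fintype V] [Nonempty V] (d : ℕ)
    (π : (Fin d → ℝ) → V → ℝ) (θ₀ : Fin d → ℝ)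
    (hπpos : ∀ θ j, 0 < π θ j) (hπsum : ∀ θ, ∑ j, π θ j = 1)
    (hπdiff : ∀ j, DifferentiableAt ℝ (fun θ => π θ j) θ₀)
    (q : V → ℝ) (hqpos : ∀ j, 0 < q j) (hqsum : ∑ j, q j = 1)
    (f f' : ℝ → ℝ) (hf : ∀ x : ℝ, 0 < x → HasDerivAt f (f' x) x) :
    fderiv ℝ (fun θ => ∑ j, q j * f (π θ j / q j)) θ₀
      = ∑ j, (π θ₀ j * f' (π θ₀ j / q j)) •
          fderiv ℝ (fun θ => Real.log (π θ j)) θ₀ :=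
  (f_divergence_gradient_general (hπpos θ₀) hπdiff (fun j => (hqpos j).ne')
    fun j => hf _ (div_pos (hπpos θ₀ j) (hqpos j))).fderiv
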